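/- Let $w \in F_2$ have length $l$, and let $\varphi$ be any automorphism of $F_2$. Then in the cyclic reduction of $\varphi(w)$, every maximal block of powers of $a$ or of $b$ has exponent of absolute value at most $l+1$, possibly after composing $\varphi$ with the automorphism swapping $a$ and $b$ and/or inverting generators; in particular the cyclic reduction of $\varphi(w)$ cannot contain both $a^{l+2}$ and $b^{l+2}$ as subwords simultaneously. -/

import Mathlib

open FreeGroup List

abbrev F2 := FreeGroup (Fin 2)

/-- The generator `a` of `F₂`. -/
def ga : F2 := FreeGroup.of 0

/-- The generator `b` of `F₂`. -/
def gb : F2 := FreeGroup.of 1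

/-- `v` contains a block `x^{±k}`: `k` consecutive occurrences of the letter `x`
with the same sign, as a contiguous subword of the reduced word of `v`.
Thus "every `x`-exponent of `v` has absolute value `≤ n`" is `¬ HasBlock x (n+1) v`. -/
def HasBlock (x : Fin 2) (k : ℕ) (v : F2) : Prop :=
  (List.replicate k (x, true)) <:+: v.toWord ∨ (List.replicate k (x, false)) <:+: v.toWord

/-- A reduced word is cyclically reduced if its last letter is not
the inverse of its first letter. -/
def CyclicallyReduced (l : List (Fin 2 × Bool)) : Prop :=
  ∀ p ∈ l.head?, ∀ q ∈ l.getLast?, q ≠ (p.1, !p.2)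

/-- `(x, y)` is a basis of `F₂`: the image of `(a, b)` under an automorphism. -/
def IsBasis (x y : F2) : Prop := ∃ φ : F2 ≃* F2, φ ga = x ∧ φ gb = y
namespace List

variable {α : Type*} [DecidableEq α]

/-- The length of the longest common prefix of two lists. -/
def lcpLength : List α → List α → ℕ
  | a :: u, b :: v => if a = b then lcpLength u v + 1 else 0
  | _, _ => 0

@[simp] theorem lcpLength_nil_left (v : List α) : lcpLength [] v = 0 := by
  simp [lcpLength]

@[simp] theorem lcpLength_nil_right (u : List α) : lcpLength u [] = 0 := by
  cases u <;> simp [lcpLength]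

theorem lcpLength_cons_cons (a b : α) (u v : List α) :
    lcpLength (a :: u) (b :: v) = if a = b then lcpLength u v + 1 else 0 := rfl

theorem lcpLength_comm (u v : List α) : lcpLength u v = lcpLength v u := by
  induction u generalizing v with
  | nil => simp
  | cons a u ih => cases v <;> grind [lcpLength]

theorem min_lcpLength_le (u v w : List α) :
    min (lcpLength u v) (lcpLength v w) ≤ lcpLength u w := by
  induction u generalizing v w with
  | nil => simp
  | cons a u ih =>
    rcases v with _ | ⟨b, v⟩
    · simp
    rcases w with _ | ⟨c, w⟩
    · simp
    have := ih v w
    simp only [lcpLength_cons_cons]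
    grind

theorem lcpLength_le_length_left (u v : List α) : lcpLength u v ≤ u.length := by
  induction u generalizing v with
  | nil => simp
  | cons a u ih => cases v <;> grind [lcpLength]

theorem lcpLength_le_length_right (u v : List α) : lcpLength u v ≤ v.length :=
  lcpLength_comm u v ▸ lcpLength_le_length_left v u

theorem take_lcpLength (u v : List α) :
    u.take (lcpLength u v) = v.take (lcpLength u v) := by
  induction u generalizing v with
  | nil => simp
  | cons a u ih =>
    rcases v with _ | ⟨b, v⟩
    · simp
    · simp only [lcpLength_cons_cons]
      split_ifs with h <;> simp [h, ih]

end List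

namespace FreeGroup

variable {α : Type*} [DecidableEq α]

theorem IsReduced.invRev {L : List (α × Bool)} (h : IsReduced L) :
    IsReduced (FreeGroup.invRev L) := by
  rw [isReduced_iff_reduce_eq, reduce_invRev, h.reduce_eq]

theorem isReduced_invRev_drop_append_drop {u v : List (α × Bool)} (hu : IsReduced u)
    (hv : IsReduced v) :
    IsReduced (invRev (u.drop (lcpLength u v)) ++ v.drop (lcpLength u v)) := by
  induction u generalizing v with
  | nil => simpa
  | cons a u ih =>
    rcases v with _ | ⟨b, v⟩
    · simpa using hu.invRev
    · rw [lcpLength_cons_cons]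
      split_ifs with h
      · simpa using ih (hu.infix (List.infix_cons (List.infix_refl u)))
          (hv.infix (List.infix_cons (List.infix_refl v)))
      · have hu' := hu.invRev
        rw [IsReduced] at hu' hv ⊢
        rw [drop_zero, drop_zero, List.isChain_append]
        refine ⟨hu', hv, ?_⟩
        simp only [FreeGroup.invRev, map_cons, reverse_cons, getLast?_concat, head?_cons,
          Option.mem_def, Option.some.injEq, forall_eq']
        intro h1
        by_contra h2
        exact h (Prod.ext h1 (by cases h3 : a.2 <;> cases h4 : b.2 <;> simp_all))

theorem inv_mk_mul_mk (u v : List (α × Bool)) :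
    (mk u)⁻¹ * mk v = mk (invRev (u.drop (lcpLength u v)) ++ v.drop (lcpLength u v)) := by
  rw [← mul_mk, ← inv_mk]
  have hu : mk u = mk (v.take (lcpLength u v)) * mk (u.drop (lcpLength u v)) := by
    rw [mul_mk, ← take_lcpLength, take_append_drop]
  have hv : mk v = mk (v.take (lcpLength u v)) * mk (v.drop (lcpLength u v)) := by
    rw [mul_mk, take_append_drop]
  calc (mk u)⁻¹ * mk v = _ := by rw [hu, hv]
    _ = _ := by group

/-- The number of letters of `g` that cancel in the product `g * h`. -/
def cancelLength (g h : FreeGroup α) : ℕ := lcpLength g⁻¹.toWord h.toWord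

theorem toWord_mul_eq (g h : FreeGroup α) :
    (g * h).toWord =
      g.toWord.take (g.norm - cancelLength g h) ++ h.toWord.drop (cancelLength g h) := by
  have h1 := inv_mk_mul_mk g⁻¹.toWord h.toWord
  rw [mk_toWord, mk_toWord, inv_inv] at h1
  rw [h1, toWord_mk,
    (isReduced_invRev_drop_append_drop isReduced_toWord isReduced_toWord).reduce_eq,
    ← cancelLength, toWord_inv]
  congr 1
  simp [FreeGroup.invRev, norm, List.drop_reverse, ← List.map_take, Function.comp_def]

theorem cancelLength_le_norm_left (g h : FreeGroup α) : cancelLength g h ≤ g.norm :=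
  (lcpLength_le_length_left _ _).trans_eq norm_inv_eq

theorem cancelLength_le_norm_right (g h : FreeGroup α) : cancelLength g h ≤ h.norm :=
  lcpLength_le_length_right _ _

theorem norm_mul_add (g h : FreeGroup α) :
    (g * h).norm + 2 * cancelLength g h = g.norm + h.norm := by
  have h1 := cancelLength_le_norm_left g h
  have h2 := cancelLength_le_norm_right g h
  rw [norm, toWord_mul_eq]
  simp only [length_append, length_take, length_drop]
  rw [norm] at *
  rw [norm] at *
  omega

theorem norm_lt_norm_mul_self {g : FreeGroup α} (hg : g ≠ 1) : g.norm < (g * g).norm := by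
  have h1 := reduceCyclically.reduce_flatten_replicate_succ (isReduced_toWord (x := g)) 1
  have h2 := reduceCyclically.conj_conjugator_reduceCyclically g.toWord
  have h3 : reduceCyclically g.toWord ≠ [] := by
    intro h
    rw [h, append_nil] at h2
    apply hg
    rw [← mk_toWord (x := g), ← h2, ← mul_mk, ← inv_mk, mul_inv_cancel]
  rw [← toWord_pow, pow_two] at h1
  have h4 := congrArg List.length h1
  have h5 := congrArg List.length h2
  have h6 := List.length_pos_of_ne_nil h3
  simp only [length_append, invRev_length, length_flatten, map_replicate, sum_replicate,
    smul_eq_mul] at h4 h5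
  rw [norm, norm]
  omega

theorem two_mul_cancelLength_self_lt {g : FreeGroup α} (hg : g ≠ 1) :
    2 * cancelLength g g < g.norm := by
  have := norm_mul_add g g
  have := norm_lt_norm_mul_self hg
  omega

theorem cancelLength_mul_left {g u v : FreeGroup α}
    (h : cancelLength g u + cancelLength u v < u.norm) :
    cancelLength (g * u) v = cancelLength u v := by
  have h1 := norm_mul_add g u
  have h2 := norm_mul_add (g * u) u⁻¹
  rw [mul_inv_cancel_right, norm_inv_eq] at h2
  have h3 := min_lcpLength_le (g * u)⁻¹.toWord u⁻¹.toWord v.toWord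
  have h4 := min_lcpLength_le u⁻¹.toWord (g * u)⁻¹.toWord v.toWord
  rw [lcpLength_comm u⁻¹.toWord] at h4
  simp only [cancelLength] at *
  omega

theorem cancelLength_inv_inv (g h : FreeGroup α) :
    cancelLength h⁻¹ g⁻¹ = cancelLength g h := by
  rw [cancelLength, cancelLength, inv_inv, lcpLength_comm]

theorem cancelLength_mul_right {u v g : FreeGroup α}
    (h : cancelLength u v + cancelLength v g < v.norm) :
    cancelLength u (v * g) = cancelLength u v := by
  rw [← cancelLength_inv_inv, mul_inv_rev, ← cancelLength_inv_inv u v]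
  apply cancelLength_mul_left
  rw [cancelLength_inv_inv, cancelLength_inv_inv, norm_inv_eq]
  omega

/-- Local-to-global principle for Nielsen reduced products. -/
theorem norm_le_norm_prod {β : Type*} {R : β → β → Prop} (f : β → FreeGroup α)
    (h₁ : ∀ s t, R s t → 2 * cancelLength (f s) (f t) ≤ (f s).norm ∧
      2 * cancelLength (f s) (f t) ≤ (f t).norm)
    (h₂ : ∀ s t r, R s t → R t r →
      cancelLength (f s) (f t) + cancelLength (f t) (f r) < (f t).norm)
    {L : List β} (hL : L.IsChain R) {t : β} (ht : t ∈ L) :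
    (f t).norm ≤ (L.map f).prod.norm := by
  have key : ∀ (L : List β) (s : β), (s :: L).IsChain R →
      (∀ r, R r s → cancelLength (f r) ((s :: L).map f).prod = cancelLength (f r) (f s)) ∧
      ∀ t ∈ s :: L, (f t).norm ≤ ((s :: L).map f).prod.norm := by
    intro L
    induction L with
    | nil => simp
    | cons q L ih =>
      intro s hs
      rw [List.isChain_cons_cons] at hs
      obtain ⟨ih₁, ih₂⟩ := ih q hs.2
      rw [List.map_cons, List.prod_cons]
      have hc := ih₁ s hs.1
      have hn := norm_mul_add (f s) (List.map f (q :: L)).prod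
      have hq := ih₂ q (by simp)
      have hsq := h₁ s q hs.1
      refine ⟨fun r hr => cancelLength_mul_right ?_, fun t ht => ?_⟩
      · rw [hc]
        exact h₂ r s q hr hs.1
      · rcases List.mem_cons.1 ht with rfl | ht
        · omega
        · have := ih₂ t ht
          omega
  rcases L with _ | ⟨s, L⟩
  · simp at ht
  · exact (key L s hL).2 t ht

end FreeGroup

/-- A family of pairs of group elements that is stable under the elementary Nielsen
transformations and under simultaneous conjugation. -/
structure NielsenClosed {G : Type*} [Group G] (B : G → G → Prop) : Prop where
  swap : ∀ {x y}, B x y → B y x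
  inv : ∀ {x y}, B x y → B x⁻¹ y
  mul : ∀ {x y}, B x y → B (x * y) y
  conj : ∀ {x y} (g : G), B x y → B (g * x * g⁻¹) (g * y * g⁻¹)

theorem nielsenClosed_closure_eq_top {G : Type*} [Group G] :
    NielsenClosed fun x y : G => Subgroup.closure {x, y} = ⊤ := by
  have key : ∀ {x y x' y' : G}, Subgroup.closure {x, y} = ⊤ →
      x ∈ Subgroup.closure {x', y'} → y ∈ Subgroup.closure {x', y'} →
      Subgroup.closure {x', y'} = ⊤ := by
    intro x y x' y' h hx hy
    rw [eq_top_iff, ← h, Subgroup.closure_le]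
    rintro z (rfl | rfl)
    exacts [hx, hy]
  have left : ∀ x y : G, x ∈ Subgroup.closure {x, y} := fun x y =>
    Subgroup.subset_closure (by simp)
  have right : ∀ x y : G, y ∈ Subgroup.closure {x, y} := fun x y =>
    Subgroup.subset_closure (by simp)
  refine ⟨fun h => key h (right _ _) (left _ _), fun {x y} h => key h ?_ (right _ _),
    fun {x y} h => key h ?_ (right _ _), fun {x y} g h => ?_⟩
  · simpa using inv_mem (left x⁻¹ y)
  · simpa using mul_mem (left (x * y) y) (inv_mem (right (x * y) y))
  · have := congrArg (Subgroup.map (MulAut.conj g).toMonoidHom) h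
    rw [MonoidHom.map_closure, Set.image_pair, Subgroup.map_top_of_surjective] at this
    · simpa using this
    · exact (MulAut.conj g).surjective

/-- A pair in the family `B` with the least possible total length. -/
def IsMinimalPair {α : Type*} [DecidableEq α] (B : FreeGroup α → FreeGroup α → Prop)
    (x y : FreeGroup α) : Prop :=
  B x y ∧ ∀ x' y', B x' y' → x.norm + y.norm ≤ x'.norm + y'.norm

namespace IsMinimalPair

variable {α : Type*} [DecidableEq α] {B : FreeGroup α → FreeGroup α → Prop}
  {x y : FreeGroup α}

theorem swap (hB : NielsenClosed B) (h : IsMinimalPair B x y) : IsMinimalPair B y x :=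
  ⟨hB.swap h.1, fun x' y' h' => (add_comm _ _).trans_le (h.2 x' y' h')⟩

theorem inv_left (hB : NielsenClosed B) (h : IsMinimalPair B x y) : IsMinimalPair B x⁻¹ y :=
  ⟨hB.inv h.1, fun x' y' h' => by rw [norm_inv_eq]; exact h.2 x' y' h'⟩

theorem inv_right (hB : NielsenClosed B) (h : IsMinimalPair B x y) : IsMinimalPair B x y⁻¹ :=
  ((h.swap hB).inv_left hB).swap hB

theorem norm_left_le (hB : NielsenClosed B) (h : IsMinimalPair B x y) :
    x.norm ≤ (x * y).norm := by
  have := h.2 _ _ (hB.mul h.1)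
  omega

theorem norm_right_le (hB : NielsenClosed B) (h : IsMinimalPair B x y) :
    y.norm ≤ (x * y).norm := by
  have := (((h.swap hB).inv_left hB).inv_right hB).norm_left_le hB
  rwa [← mul_inv_rev, norm_inv_eq, norm_inv_eq] at this

theorem two_mul_cancelLength_le (hB : NielsenClosed B) (h : IsMinimalPair B x y) :
    2 * cancelLength x y ≤ x.norm ∧ 2 * cancelLength x y ≤ y.norm := by
  have h1 := norm_mul_add x y
  have h2 := h.norm_left_le hB
  have h3 := h.norm_right_le hB
  omega

theorem cancelLength_add_lt_inv (hB : NielsenClosed B) (h : IsMinimalPair B x y)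
    (hy : y ≠ 1) : cancelLength x y + cancelLength y x⁻¹ < y.norm := by
  have h1 := h.two_mul_cancelLength_le hB
  have h2 := ((h.inv_left hB).swap hB).two_mul_cancelLength_le hB
  have h3 := two_mul_cancelLength_self_lt hy
  have h4 := min_lcpLength_le y⁻¹.toWord x⁻¹.toWord y.toWord
  simp only [cancelLength] at *
  omega

theorem cancelLength_add_lt (hB : NielsenClosed B) (h : IsMinimalPair B x y)
    (hy : y ≠ 1) : cancelLength x y + cancelLength y x < y.norm := by
  by_contra! hle
  have h1 := h.two_mul_cancelLength_le hB
  have h2 := (h.swap hB).two_mul_cancelLength_le hB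
  obtain ⟨n, hn⟩ : ∃ n, n = cancelLength x y := ⟨_, rfl⟩
  have hn' : n = cancelLength y x := by omega
  have hyn : y.norm = 2 * n := by omega
  have hn0 : n ≠ 0 := by
    rintro rfl
    exact hy (norm_eq_zero.1 hyn)
  have hx : 2 * n ≤ x.norm := by
    have := norm_mul_add x y
    have := h.norm_right_le hB
    omega
  have e1 : x⁻¹.toWord.take n = y.toWord.take n := by
    rw [hn]
    exact take_lcpLength _ _
  have e2 : y⁻¹.toWord.take n = x.toWord.take n := by
    rw [hn']
    exact take_lcpLength _ _
  rw [toWord_inv] at e1 e2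
  obtain ⟨p, q, hpq, hp, hq⟩ : ∃ p q, y.toWord = p ++ q ∧ p.length = n ∧ q.length = n :=
    ⟨y.toWord.take n, y.toWord.drop n, by simp, by simp; rw [FreeGroup.norm] at hyn; omega,
      by simp; rw [FreeGroup.norm] at hyn; omega⟩
  obtain ⟨r, m, s, hrms, hr, hs⟩ : ∃ r m s, x.toWord = r ++ m ++ s ∧ r.length = n ∧
      s.length = n := by
    rw [FreeGroup.norm] at hx
    refine ⟨x.toWord.take n, (x.toWord.drop n).take (x.toWord.length - 2 * n),
      (x.toWord.drop n).drop (x.toWord.length - 2 * n), by simp [append_assoc], by simp; omega,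
      by simp; omega⟩
  have e3 : invRev s = p := by
    rw [hpq, hrms, invRev_append, take_append_of_le_length (by simp [hs]),
      take_of_length_le (by simp [hs]), take_append_of_le_length (by simp [hp]),
      take_of_length_le (by simp [hp])] at e1
    exact e1
  have e4 : invRev q = r := by
    rw [hpq, hrms, invRev_append, append_assoc, take_append_of_le_length (by simp [hq]),
      take_of_length_le (by simp [hq]), take_append_of_le_length (by simp [hr]),
      take_of_length_le (by simp [hr])] at e2
    exact e2
  have hye : y = mk p * mk q := by rw [mul_mk, ← hpq, mk_toWord]
  have hxe : x = (mk q)⁻¹ * mk m * (mk p)⁻¹ := by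
    rw [← e3, ← inv_mk, inv_inv, inv_mk, e4, mul_mk, mul_mk, ← hrms, mk_toWord]
  have hb := h.2 _ _ (hB.conj (mk q) (hB.mul h.1))
  have c1 : mk q * (x * y) * (mk q)⁻¹ = mk m := by
    rw [hxe, hye]
    group
  have c2 : mk q * y * (mk q)⁻¹ = mk (q ++ p) := by
    rw [hye, ← mul_mk]
    group
  rw [c1, c2] at hb
  have l1 := norm_mk_le (L₁ := m)
  have l2 := norm_mk_le (L₁ := q ++ p)
  have l3 := congrArg List.length hrms
  rw [← FreeGroup.norm] at l3
  simp only [length_append] at l2 l3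
  omega

end IsMinimalPair

/-- The value of a letter or of its inverse in a pair of elements. -/
def letterValue {G : Type*} [Group G] (x y : G) (s : Fin 2 × Bool) : G :=
  cond s.2 (![x, y] s.1) (![x, y] s.1)⁻¹

theorem lift_eq_prod_map_letterValue {G : Type*} [Group G] (x y : G) (w : F2) :
    lift ![x, y] w = (w.toWord.map (letterValue x y)).prod := by
  conv_lhs => rw [← mk_toWord (x := w)]
  exact lift_mk

theorem norm_letterValue (x y : F2) (s : Fin 2 × Bool) :
    (letterValue x y s).norm = (![x, y] s.1).norm := by
  rcases s with ⟨i, _ | _⟩ <;> simp [letterValue]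

theorem IsMinimalPair.letterValue {B : F2 → F2 → Prop} (hB : NielsenClosed B) {x y : F2}
    (h : IsMinimalPair B x y) {s t : Fin 2 × Bool} (hst : s.1 ≠ t.1) :
    IsMinimalPair B (letterValue x y s) (letterValue x y t) := by
  have aux : ∀ {u v : F2}, IsMinimalPair B u v → ∀ b c : Bool,
      IsMinimalPair B (cond b u u⁻¹) (cond c v v⁻¹) := by
    rintro u v h (_ | _) (_ | _)
    exacts [(h.inv_left hB).inv_right hB, h.inv_left hB, h.inv_right hB, h]
  obtain ⟨i, b⟩ := s
  obtain ⟨j, c⟩ := t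
  fin_cases i <;> fin_cases j
  · exact absurd rfl hst
  · exact aux h b c
  · exact aux (h.swap hB) b c
  · exact absurd rfl hst

theorem IsMinimalPair.norm_letterValue_le {B : F2 → F2 → Prop} (hB : NielsenClosed B)
    {x y : F2} (h : IsMinimalPair B x y) (hx : x ≠ 1) (hy : y ≠ 1) (w : F2)
    {t : Fin 2 × Bool} (ht : t ∈ w.toWord) :
    (_root_.letterValue x y t).norm ≤ (lift ![x, y] w).norm := by
  have hne : ∀ s, _root_.letterValue x y s ≠ 1 := by
    rintro ⟨i, _ | _⟩ <;> fin_cases i <;> simpa [_root_.letterValue]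
  have hR : ∀ {s t : Fin 2 × Bool}, (s.1 = t.1 → s.2 = t.2) → s.1 = t.1 → s = t :=
    fun h1 h2 => Prod.ext h2 (h1 h2)
  rw [lift_eq_prod_map_letterValue]
  have h₁ : ∀ s t : Fin 2 × Bool, (s.1 = t.1 → s.2 = t.2) →
      2 * cancelLength (_root_.letterValue x y s) (_root_.letterValue x y t) ≤
        (_root_.letterValue x y s).norm ∧
      2 * cancelLength (_root_.letterValue x y s) (_root_.letterValue x y t) ≤
        (_root_.letterValue x y t).norm := by
    intro s t hst
    by_cases h1 : s.1 = t.1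
    · obtain rfl := hR hst h1
      have := two_mul_cancelLength_self_lt (hne s)
      omega
    · exact (h.letterValue hB h1).two_mul_cancelLength_le hB
  refine norm_le_norm_prod (R := fun a b : Fin 2 × Bool => a.1 = b.1 → a.2 = b.2) _ h₁ ?_
    isReduced_toWord ht
  intro s t r hst htr
  have b1 := h₁ s t hst
  have b2 := h₁ t r htr
  have b3 := two_mul_cancelLength_self_lt (hne t)
  by_cases h1 : s.1 = t.1
  · obtain rfl := hR hst h1
    omega
  by_cases h2 : t.1 = r.1
  · obtain rfl := hR htr h2
    omega
  have hm := h.letterValue hB h1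
  have h3 : r.1 = s.1 := by omega
  by_cases h4 : r.2 = s.2
  · obtain rfl : r = s := Prod.ext h3 h4
    exact hm.cancelLength_add_lt hB (hne t)
  · have : _root_.letterValue x y r = (_root_.letterValue x y s)⁻¹ := by
      obtain ⟨i, b⟩ := r
      obtain ⟨j, c⟩ := s
      obtain rfl : i = j := h3
      cases b <;> cases c <;> simp_all [_root_.letterValue]
    rw [this]
    exact hm.cancelLength_add_lt_inv hB (hne t)

theorem not_commute_ga_gb : ¬ Commute ga gb := by
  intro h
  have := congrArg toWord h.eq
  revert this
  decide

theorem closure_pair_ne_top_of_commute {x y : F2} (h : Commute x y) :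
    Subgroup.closure {x, y} ≠ ⊤ := by
  intro htop
  have h1 : ∀ z ∈ Subgroup.closure {x, y}, ∀ w ∈ Subgroup.closure {x, y}, z * w = w * z := by
    intro z hz w hw
    have := Subgroup.isMulCommutative_closure (k := {x, y}) (by
      rintro a (rfl | rfl) b (rfl | rfl)
      exacts [rfl, h.eq, h.eq.symm, rfl])
    exact congrArg Subtype.val (this.is_comm.comm (⟨z, hz⟩ : Subgroup.closure {x, y}) ⟨w, hw⟩)
  rw [htop] at h1
  exact not_commute_ga_gb (h1 _ trivial _ trivial)

/-- **Nielsen's theorem** in rank two: a Nielsen closed family of generating pairs contains a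
pair of letters. -/
theorem NielsenClosed.exists_norm_eq_one {B : F2 → F2 → Prop} (hB : NielsenClosed B)
    (hgen : ∀ x y, B x y → Subgroup.closure {x, y} = ⊤) {x y : F2} (h : B x y) :
    ∃ x y, B x y ∧ x.norm = 1 ∧ y.norm = 1 := by
  obtain ⟨⟨x, y⟩, hxy, hmin⟩ := exists_minimalFor_of_wellFoundedLT
    (fun p : F2 × F2 => B p.1 p.2) (fun p => p.1.norm + p.2.norm) ⟨(x, y), h⟩
  have hm : IsMinimalPair B x y := by
    refine ⟨hxy, fun x' y' h' => ?_⟩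
    have := @hmin (x', y') h'
    simp only at this
    omega
  have one_left : ∀ {u v : F2}, B u v → u ≠ 1 := by
    rintro u v h rfl
    exact closure_pair_ne_top_of_commute (Commute.one_left v) (hgen _ _ h)
  have hx := one_left hxy
  have hy := one_left (hB.swap hxy)
  have hsurj : ∀ z, ∃ w, lift ![x, y] w = z := by
    rw [← Function.Surjective, lift_surjective_iff_closure_range_eq_top]
    simpa [Set.pair_comm] using hgen _ _ hxy
  have key : ∀ i : Fin 2, (![x, y] i).norm ≤ 1 := by
    intro i
    by_contra! hi
    have hpow : ∀ j : Fin 2, of j ∈ Subgroup.zpowers (![x, y] (1 - i)) := by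
      intro j
      obtain ⟨w, hw⟩ := hsurj (of j)
      rw [← hw, lift_eq_prod_map_letterValue]
      refine list_prod_mem fun z hz => ?_
      obtain ⟨s, hs, rfl⟩ := List.mem_map.1 hz
      have h1 := hm.norm_letterValue_le hB hx hy w hs
      rw [hw, norm_of, norm_letterValue] at h1
      have h2 : s.1 = 1 - i := by
        have : s.1 ≠ i := by
          rintro rfl
          omega
        omega
      rw [letterValue, h2]
      cases s.2
      · exact inv_mem (Subgroup.mem_zpowers _)
      · exact Subgroup.mem_zpowers _
    obtain ⟨m, hm⟩ := hpow 0
    obtain ⟨n, hn⟩ := hpow 1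
    apply not_commute_ga_gb
    rw [ga, gb, ← hm, ← hn]
    exact Commute.zpow_zpow_self _ _ _
  refine ⟨x, y, hxy, ?_, ?_⟩
  · exact le_antisymm (key 0) (Nat.one_le_iff_ne_zero.2 (mt norm_eq_zero.1 hx))
  · exact le_antisymm (key 1) (Nat.one_le_iff_ne_zero.2 (mt norm_eq_zero.1 hy))

/-- The pairs obtained from `(a, b)` by swaps and positive Nielsen transformations. -/
inductive PositivePair : F2 → F2 → Prop
  | base : PositivePair ga gb
  | swap {x y : F2} : PositivePair x y → PositivePair y x
  | mul {x y : F2} : PositivePair x y → PositivePair (x * y) y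

/-- The endomorphism of `F₂` inverting the generators `i` with `ε i = false`. -/
def signFlip (ε : Fin 2 → Bool) : F2 →* F2 := lift fun i => mk [(i, ε i)]

/-- The pairs obtained from positive pairs by inverting generators of `F₂`, inverting and
swapping the two elements, and simultaneous conjugation. -/
inductive SignedPositivePair : F2 → F2 → Prop
  | sign {x y : F2} (ε : Fin 2 → Bool) :
      PositivePair x y → SignedPositivePair (signFlip ε x) (signFlip ε y)
  | swap {x y : F2} : SignedPositivePair x y → SignedPositivePair y x
  | inv {x y : F2} : SignedPositivePair x y → SignedPositivePair x⁻¹ y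
  | conj {x y : F2} (g : F2) :
      SignedPositivePair x y → SignedPositivePair (g * x * g⁻¹) (g * y * g⁻¹)

theorem signFlip_of (ε : Fin 2 → Bool) (i : Fin 2) : signFlip ε (of i) = mk [(i, ε i)] := by
  simp [signFlip]

theorem signFlip_update_of_self (ε : Fin 2 → Bool) (i : Fin 2) :
    signFlip (Function.update ε i (!ε i)) (of i) = (signFlip ε (of i))⁻¹ := by
  simp [signFlip_of, FreeGroup.invRev]

theorem signFlip_update_of_ne (ε : Fin 2 → Bool) {i j : Fin 2} (h : j ≠ i) (b : Bool) :
    signFlip (Function.update ε i b) (of j) = signFlip ε (of j) := by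
  simp [signFlip_of, h]

namespace SignedPositivePair

theorem conj_mul {x y z : F2} (g : F2) (h : SignedPositivePair (x * y) z) :
    SignedPositivePair (g * x * g⁻¹ * (g * y * g⁻¹)) (g * z * g⁻¹) := by
  convert h.conj g using 1
  group

theorem sign_mul_inv {x y : F2} (h : PositivePair x y) (ε : Fin 2 → Bool) :
    SignedPositivePair (signFlip ε x * (signFlip ε y)⁻¹) (signFlip ε y) ∧
      SignedPositivePair (signFlip ε y * (signFlip ε x)⁻¹) (signFlip ε x) := by
  induction h with
  | base =>
    have h1 := (sign (Function.update ε 1 (!ε 1)) PositivePair.base.mul).swap.inv.swap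
    have h2 := (sign (Function.update ε 0 (!ε 0)) PositivePair.base.swap.mul).swap.inv.swap
    rw [_root_.map_mul, ga, gb, signFlip_update_of_self, signFlip_update_of_ne _ (by decide),
      inv_inv] at h1 h2
    exact ⟨h1, h2⟩
  | swap _ ih => exact ih.symm
  | @mul x y h _ =>
    have h1 := sign ε h
    have h2 := ((sign ε h.swap.mul).swap.inv.conj (signFlip ε x))
    simp only [_root_.map_mul] at h2 ⊢
    constructor
    · simpa using h1
    · convert h2 using 1 <;> group

theorem mul_and_mul_inv {x y : F2} (h : SignedPositivePair x y) :
    (SignedPositivePair (x * y) y ∧ SignedPositivePair (x * y⁻¹) y) ∧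
      SignedPositivePair (y * x) x ∧ SignedPositivePair (y * x⁻¹) x := by
  induction h with
  | sign ε h =>
    refine ⟨⟨?_, (sign_mul_inv h ε).1⟩, ?_, (sign_mul_inv h ε).2⟩
    · simpa using sign ε h.mul
    · simpa using sign ε h.swap.mul
  | swap _ ih => exact ih.symm
  | @inv x y _ ih =>
    obtain ⟨⟨h1, h2⟩, h3, h4⟩ := ih
    refine ⟨⟨?_, ?_⟩, h4.swap.inv.swap, ?_⟩
    · convert h2.inv.conj y⁻¹ using 1 <;> group
    · convert h1.inv.conj y using 1 <;> group
    · simpa using h3.swap.inv.swap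
  | conj g _ ih =>
    obtain ⟨⟨h1, h2⟩, h3, h4⟩ := ih
    simp only [conj_inv]
    exact ⟨⟨h1.conj_mul g, h2.conj_mul g⟩, h3.conj_mul g, h4.conj_mul g⟩

theorem of_norm_eq_one {x y : F2} (hx : x.norm = 1) (hy : y.norm = 1) (h : ¬ Commute x y) :
    SignedPositivePair x y := by
  obtain ⟨⟨i, b⟩, hi⟩ := List.length_eq_one_iff.1 hx
  obtain ⟨⟨j, c⟩, hj⟩ := List.length_eq_one_iff.1 hy
  obtain rfl : x = mk [(i, b)] := by rw [← hi, mk_toWord]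
  obtain rfl : y = mk [(j, c)] := by rw [← hj, mk_toWord]
  have letter : ∀ (i : Fin 2) (b : Bool), mk [(i, b)] = cond b (of i) (of i)⁻¹ := by
    rintro i (_ | _) <;> rfl
  fin_cases i <;> fin_cases j
  · refine absurd ?_ h
    rw [letter, letter]
    cases b <;> cases c <;> simp [Commute.inv_left_iff, Commute.inv_right_iff]
  · simpa [ga, gb, signFlip_of] using sign ![b, c] PositivePair.base
  · simpa [ga, gb, signFlip_of] using sign ![c, b] PositivePair.base.swap
  · refine absurd ?_ h
    rw [letter, letter]
    cases b <;> cases c <;> simp [Commute.inv_left_iff, Commute.inv_right_iff]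

theorem of_closure_eq_top {x y : F2} (h : Subgroup.closure {x, y} = ⊤) :
    SignedPositivePair x y := by
  by_contra hxy
  have hgen := nielsenClosed_closure_eq_top (G := F2)
  have hB : NielsenClosed fun x y : F2 =>
      Subgroup.closure {x, y} = ⊤ ∧ ¬ SignedPositivePair x y := by
    refine ⟨fun h => ⟨hgen.swap h.1, fun h' => h.2 h'.swap⟩,
      fun h => ⟨hgen.inv h.1, fun h' => h.2 (by simpa using h'.inv)⟩,
      fun h => ⟨hgen.mul h.1, fun h' => h.2 (by simpa using h'.mul_and_mul_inv.1.2)⟩,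
      fun g h => ⟨hgen.conj g h.1, fun h' => h.2 ?_⟩⟩
    convert h'.conj g⁻¹ using 1 <;> group
  obtain ⟨u, v, ⟨h1, h2⟩, hu, hv⟩ := hB.exists_norm_eq_one (fun _ _ h => h.1) ⟨h, hxy⟩
  exact h2 (of_norm_eq_one hu hv fun hc => closure_pair_ne_top_of_commute hc h1)

end SignedPositivePair

/-- A word in which no two consecutive letters are powers of the generator `i`. -/
def IsIsolated (i : Fin 2) (L : List (Fin 2 × Bool)) : Prop :=
  L.IsChain fun p q => ¬ (p.1 = i ∧ q.1 = i)

theorem IsIsolated.invRev {i : Fin 2} {L : List (Fin 2 × Bool)} (h : IsIsolated i L) :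
    IsIsolated i (FreeGroup.invRev L) := by
  rw [IsIsolated, FreeGroup.invRev, List.isChain_reverse, List.isChain_map]
  exact h.imp fun p q hpq hqp => hpq hqp.symm

/-- The positive elements that can be written without consecutive letters `i` and without a
final letter `i`. -/
def isolatedSubmonoid (i : Fin 2) : Submonoid F2 where
  carrier := {x | ∃ L : List (Fin 2), x = (L.map of).prod ∧
    (L ++ [i]).IsChain fun p q => ¬ (p = i ∧ q = i)}
  one_mem' := ⟨[], by simp, by simp⟩
  mul_mem' := by
    rintro _ _ ⟨L, rfl, hL⟩ ⟨M, rfl, hM⟩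
    refine ⟨L ++ M, by simp, ?_⟩
    rw [append_assoc, List.isChain_append]
    rw [List.isChain_append] at hL
    refine ⟨hL.1, hM, fun p hp q _ hpq => hL.2.2 p hp i (by simp) ⟨hpq.1, rfl⟩⟩

theorem of_mem_isolatedSubmonoid {i j : Fin 2} (h : j ≠ i) : of j ∈ isolatedSubmonoid i :=
  ⟨[j], by simp, by simp [h]⟩

theorem of_mul_of_mem_isolatedSubmonoid {i j : Fin 2} (h : j ≠ i) :
    of i * of j ∈ isolatedSubmonoid i :=
  ⟨[i, j], by simp, by simp [h]⟩

theorem PositivePair.mem_isolatedSubmonoid {x y : F2} (h : PositivePair x y) :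
    (x = ga ∧ y = gb) ∨ (x = gb ∧ y = ga) ∨
      ∃ i, x ∈ isolatedSubmonoid i ∧ y ∈ isolatedSubmonoid i := by
  induction h with
  | base => exact Or.inl ⟨rfl, rfl⟩
  | swap _ ih =>
    rcases ih with ⟨rfl, rfl⟩ | ⟨rfl, rfl⟩ | ⟨i, hx, hy⟩
    exacts [Or.inr (Or.inl ⟨rfl, rfl⟩), Or.inl ⟨rfl, rfl⟩, Or.inr (Or.inr ⟨i, hy, hx⟩)]
  | mul _ ih =>
    refine Or.inr (Or.inr ?_)
    rcases ih with ⟨rfl, rfl⟩ | ⟨rfl, rfl⟩ | ⟨i, hx, hy⟩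
    · exact ⟨0, of_mul_of_mem_isolatedSubmonoid (by decide), of_mem_isolatedSubmonoid (by decide)⟩
    · exact ⟨1, of_mul_of_mem_isolatedSubmonoid (by decide), of_mem_isolatedSubmonoid (by decide)⟩
    · exact ⟨i, mul_mem hx hy, hy⟩

theorem isIsolated_signFlip {i : Fin 2} {x : F2} (h : x ∈ isolatedSubmonoid i)
    (ε : Fin 2 → Bool) : IsIsolated i (signFlip ε x).toWord := by
  obtain ⟨L, rfl, hL⟩ := h
  have h1 : signFlip ε (L.map of).prod = mk (L.map fun j => (j, ε j)) := by
    clear hL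
    induction L with
    | nil => exact _root_.map_one (signFlip ε)
    | cons j L ih =>
      rw [List.map_cons, List.prod_cons, _root_.map_mul, ih, signFlip_of, mul_mk, List.map_cons,
        List.singleton_append]
  have h2 : FreeGroup.IsReduced (L.map fun j => (j, ε j)) := by
    rw [FreeGroup.IsReduced, List.isChain_map]
    refine List.IsChain.imp (R := fun _ _ => True) ?_ ?_
    · rintro p q - rfl
      rfl
    · clear hL h1
      induction L with
      | nil => simp
      | cons j L ih => cases L <;> simp_all
  rw [h1, toWord_mk, h2.reduce_eq, IsIsolated, List.isChain_map]
  exact (List.isChain_append.1 hL).1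

theorem isIsolated_signFlip_of (i j : Fin 2) (ε : Fin 2 → Bool) :
    IsIsolated i (signFlip ε (of j)).toWord := by
  rw [signFlip_of, toWord_mk, reduce_singleton]
  exact List.isChain_singleton _

/-- Every basis of `F₂` has a conjugate in which one of the generators is isolated. -/
theorem SignedPositivePair.exists_isIsolated {x y : F2} (h : SignedPositivePair x y) :
    ∃ i g, IsIsolated i (g * x * g⁻¹).toWord ∧ IsIsolated i (g * y * g⁻¹).toWord := by
  induction h with
  | sign ε h =>
    rcases h.mem_isolatedSubmonoid with ⟨rfl, rfl⟩ | ⟨rfl, rfl⟩ | ⟨i, hx, hy⟩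
    · exact ⟨0, 1, by simpa [ga, gb] using isIsolated_signFlip_of 0 0 ε,
        by simpa [ga, gb] using isIsolated_signFlip_of 0 1 ε⟩
    · exact ⟨0, 1, by simpa [ga, gb] using isIsolated_signFlip_of 0 1 ε,
        by simpa [ga, gb] using isIsolated_signFlip_of 0 0 ε⟩
    · exact ⟨i, 1, by simpa using isIsolated_signFlip hx ε,
        by simpa using isIsolated_signFlip hy ε⟩
  | swap _ ih =>
    obtain ⟨i, g, hx, hy⟩ := ih
    exact ⟨i, g, hy, hx⟩
  | inv _ ih =>
    obtain ⟨i, g, hx, hy⟩ := ih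
    refine ⟨i, g, ?_, hy⟩
    rw [← conj_inv, toWord_inv]
    exact hx.invRev
  | @conj x y k _ ih =>
    obtain ⟨i, g, hx, hy⟩ := ih
    have aux : ∀ z : F2, g * k⁻¹ * (k * z * k⁻¹) * (g * k⁻¹)⁻¹ = g * z * g⁻¹ := by
      intro z
      group
    exact ⟨i, g * k⁻¹, by rwa [aux], by rwa [aux]⟩

/-- One more than the number of pairs of consecutive letters of a nonempty list that both
satisfy `p`; it bounds the length of the runs of letters satisfying `p`. -/
def runWeight {α : Type*} (p : α → Bool) : List α → ℕ
  | [] => 0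
  | [_] => 1
  | a :: b :: l => runWeight p (b :: l) + if p a && p b then 1 else 0

section runWeight

variable {α : Type*} (p : α → Bool)

theorem runWeight_append_le (u v : List α) :
    runWeight p (u ++ v) ≤ runWeight p u + runWeight p v := by
  induction u with
  | nil => simp [runWeight]
  | cons a u ih =>
    rcases u with _ | ⟨b, u⟩
    · rcases v with _ | ⟨c, v⟩
      · simp
      · simp only [singleton_append, runWeight]
        split_ifs <;> omega
    · simp only [cons_append, runWeight] at ih ⊢
      omega

theorem add_le_runWeight_append (u v : List α) :
    runWeight p u + runWeight p v ≤ runWeight p (u ++ v) + 1 := by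
  induction u with
  | nil => simp [runWeight]
  | cons a u ih =>
    rcases u with _ | ⟨b, u⟩
    · rcases v with _ | ⟨c, v⟩
      · simp [runWeight]
      · simp only [singleton_append, runWeight]
        omega
    · simp only [cons_append, runWeight] at ih ⊢
      omega

theorem one_le_runWeight_cons (a : α) (u : List α) : 1 ≤ runWeight p (a :: u) := by
  induction u generalizing a with
  | nil => simp [runWeight]
  | cons b u ih => exact (ih b).trans (Nat.le_add_right _ _)

theorem runWeight_le_append_left (u v : List α) : runWeight p u ≤ runWeight p (u ++ v) := by
  rcases v with _ | ⟨a, v⟩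
  · simp
  · have := add_le_runWeight_append p u (a :: v)
    have := one_le_runWeight_cons p a v
    omega

theorem runWeight_le_append_right (u v : List α) : runWeight p v ≤ runWeight p (u ++ v) := by
  rcases u with _ | ⟨a, u⟩
  · simp
  · have := add_le_runWeight_append p (a :: u) v
    have := one_le_runWeight_cons p a u
    omega

theorem runWeight_le_of_infix {u v : List α} (h : u <:+: v) :
    runWeight p u ≤ runWeight p v := by
  obtain ⟨s, t, rfl⟩ := h
  exact (runWeight_le_append_right p s u).trans (runWeight_le_append_left p _ t)

theorem runWeight_le_of_isRotated {u v : List α} (h : u ~r v) :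
    runWeight p u ≤ runWeight p v + 1 := by
  obtain ⟨n, rfl⟩ := h
  rw [List.rotate_eq_drop_append_take_mod]
  have h1 := runWeight_append_le p (u.take (n % u.length)) (u.drop (n % u.length))
  rw [List.take_append_drop] at h1
  have h2 := add_le_runWeight_append p (u.drop (n % u.length)) (u.take (n % u.length))
  omega

theorem runWeight_replicate {a : α} (ha : p a = true) (k : ℕ) :
    runWeight p (List.replicate k a) = k := by
  induction k with
  | zero => simp [runWeight]
  | succ k ih =>
    rcases k with _ | k
    · simp [runWeight]
    · rw [List.replicate_succ] at ih
      simp [List.replicate_succ, runWeight, ha, ih]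

theorem runWeight_le_one {u : List α} (h : u.IsChain fun a b => ¬ (p a ∧ p b)) :
    runWeight p u ≤ 1 := by
  induction u with
  | nil => simp [runWeight]
  | cons a u ih =>
    rcases u with _ | ⟨b, u⟩
    · simp [runWeight]
    · rw [List.isChain_cons_cons] at h
      have := ih h.2
      simp only [runWeight, Bool.and_eq_true, if_neg h.1, add_zero, this]

end runWeight

namespace FreeGroup

variable {α : Type*} [DecidableEq α] (p : α × Bool → Bool)

theorem runWeight_mul_le (g h : FreeGroup α) :
    runWeight p (g * h).toWord ≤ runWeight p g.toWord + runWeight p h.toWord := by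
  rw [toWord_mul_eq]
  exact (runWeight_append_le p _ _).trans (Nat.add_le_add
    (runWeight_le_of_infix p (List.take_prefix _ _).isInfix)
    (runWeight_le_of_infix p (List.drop_suffix _ _).isInfix))

theorem runWeight_prod_le_length (L : List (FreeGroup α))
    (hL : ∀ g ∈ L, runWeight p g.toWord ≤ 1) : runWeight p L.prod.toWord ≤ L.length := by
  induction L with
  | nil => simp [runWeight]
  | cons g L ih =>
    have h1 := ih fun g hg => hL g (by simp [hg])
    have h2 := hL g (by simp)
    have h3 := runWeight_mul_le p g L.prod
    rw [List.prod_cons, List.length_cons]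
    omega

theorem isCyclicallyReduced_append_singleton_iff {a : α × Bool} {C : List (α × Bool)} :
    IsCyclicallyReduced (C ++ [a]) ↔ IsCyclicallyReduced (a :: C) := by
  rcases List.eq_nil_or_concat C with rfl | ⟨D, y, rfl⟩
  · rfl
  · obtain ⟨x, E, hE⟩ : ∃ x E, D ++ [y] = x :: E := by cases D <;> simp
    have hlast : y ∈ (x :: E).getLast? := by simp [← hE]
    have hhead : (x :: E ++ [a]).head? = some x := rfl
    have hflip : (a.1 = x.1 → a.2 = x.2) ↔ (x.1 = a.1 → x.2 = a.2) := by
      simp only [eq_comm]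
    have hflip' : (a.1 = y.1 → a.2 = y.2) ↔ (y.1 = a.1 → y.2 = a.2) := by
      simp only [eq_comm]
    simp only [isCyclicallyReduced_iff, FreeGroup.IsReduced, List.isChain_append,
      concat_eq_append, hE, List.isChain_cons_cons, List.isChain_singleton, List.getLast?_cons_cons,
      Option.mem_def.1 hlast, List.getLast?_concat, hhead, List.head?_cons,
      Option.mem_some_iff, forall_eq', true_and]
    tauto

/-- A rotation of a cyclically reduced word occurs in the reduced form of each of its
conjugates. -/
theorem exists_isRotated_infix_conj {L : List (α × Bool)} (hL : IsReduced L)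
    {C : List (α × Bool)} (hC : IsCyclicallyReduced C) :
    ∃ C', C ~r C' ∧ C' <:+: (mk L * mk C * (mk L)⁻¹).toWord := by
  induction L using List.reverseRecOn generalizing C with
  | nil =>
    refine ⟨C, List.IsRotated.refl C, ?_⟩
    rw [← one_eq_mk, one_mul, inv_one, mul_one, toWord_mk, hC.isReduced.reduce_eq]
  | append_singleton L z ih =>
    have hL' : IsReduced L := hL.infix (List.prefix_append L _).isInfix
    have hz : mk [(z.1, !z.2)] = (mk [z])⁻¹ := rfl
    by_cases h0 : C = []
    · exact ⟨[], by simp [h0], List.nil_infix⟩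
    by_cases hhead : ∃ D, C = (z.1, !z.2) :: D
    · obtain ⟨D, rfl⟩ := hhead
      obtain ⟨C', h1, h2⟩ := ih hL' (isCyclicallyReduced_append_singleton_iff.2 hC)
      refine ⟨C', List.IsRotated.trans ⟨1, by simp⟩ h1, ?_⟩
      convert h2 using 2
      have e : mk ((z.1, !z.2) :: D) = (mk [z])⁻¹ * mk D := by
        rw [← hz, mul_mk]
        rfl
      rw [e, ← mul_mk, ← mul_mk, hz]
      group
    by_cases hlast : ∃ D, C = D ++ [z]
    · obtain ⟨D, rfl⟩ := hlast
      obtain ⟨C', h1, h2⟩ := ih hL' (isCyclicallyReduced_append_singleton_iff.1 hC)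
      refine ⟨C', List.IsRotated.trans (List.IsRotated.symm ⟨1, by simp⟩) h1, ?_⟩
      convert h2 using 2
      have e : mk (z :: D) = mk [z] * mk D := by
        rw [mul_mk]
        rfl
      rw [e, ← mul_mk, ← mul_mk]
      group
    · refine ⟨C, List.IsRotated.refl C, ?_⟩
      have left : IsReduced (L ++ [z] ++ C) := by
        refine List.isChain_append.2 ⟨hL, hC.isReduced, fun x hx y hy hxy => ?_⟩
        obtain rfl : z = x := by simpa using hx
        obtain ⟨D, rfl⟩ := List.head?_eq_some_iff.1 hy
        by_contra hne
        exact hhead ⟨D, by rw [hxy, Bool.not_eq.2 hne]⟩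
      have right : IsReduced (C ++ invRev (L ++ [z])) := by
        refine List.isChain_append.2 ⟨hC.isReduced, hL.invRev, fun x hx y hy hxy => ?_⟩
        obtain rfl : (z.1, !z.2) = y := by simpa [FreeGroup.invRev] using hy
        obtain ⟨D, rfl⟩ := List.getLast?_eq_some_iff.1 hx
        by_contra hne
        exact hlast ⟨D, by rw [show x = z from Prod.ext hxy (by simpa using hne)]⟩
      rw [inv_mk, mul_mk, mul_mk, toWord_mk, (left.append_overlap right h0).reduce_eq]
      exact ⟨_, _, rfl⟩

end FreeGroup

/-- For `w` of length `l` and any automorphism `φ`, in the cyclic reduction of `φ w`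
all maximal blocks of one of the generators (`a` or `b` — which one may depend on
composing with the swap/inversion automorphisms) have exponent of absolute value at
most `l + 1`; in particular the cyclic reduction cannot contain both `a^{l+2}` and
`b^{l+2}` as subwords. -/
theorem blocks_bounded_in_automorphic_image (w : F2) (l : ℕ)
    (hl : l = w.toWord.length) (φ : F2 ≃* F2)
    (c h : F2) (hc : φ w = h * c * h⁻¹) (hcr : CyclicallyReduced c.toWord) :
    (∃ x : Fin 2, ¬ HasBlock x (l + 2) c) ∧
      ¬ ((ga ^ (l + 2)).toWord <:+: c.toWord ∧ (gb ^ (l + 2)).toWord <:+: c.toWord) := by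
  have hblock : ∃ x : Fin 2, ¬ HasBlock x (l + 2) c := by
    have hlift : ∀ g v : F2, lift ![g * φ ga * g⁻¹, g * φ gb * g⁻¹] v = g * φ v * g⁻¹ := by
      intro g v
      refine (lift_unique ((MulAut.conj g).toMonoidHom.comp φ.toMonoidHom) fun i => ?_).symm
      fin_cases i <;> rfl
    have hgen : Subgroup.closure {φ ga, φ gb} = ⊤ := by
      have h1 : (lift ![φ ga, φ gb]).range = ⊤ := by
        rw [MonoidHom.range_eq_top]
        intro z
        exact ⟨φ.symm z, by simpa using hlift 1 (φ.symm z)⟩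
      rw [range_lift_eq_closure] at h1
      simpa [Set.pair_comm] using h1
    obtain ⟨i, g, hx, hy⟩ := (SignedPositivePair.of_closure_eq_top hgen).exists_isIsolated
    refine ⟨i, fun hb => ?_⟩
    let p : Fin 2 × Bool → Bool := fun s => s.1 = i
    have hp : ∀ z : F2, IsIsolated i z.toWord → runWeight p z.toWord ≤ 1 := fun z hz =>
      runWeight_le_one p (hz.imp fun s t hst => by simpa [p] using hst)
    have h1 : runWeight p (g * φ w * g⁻¹).toWord ≤ l := by
      rw [← hlift, lift_eq_prod_map_letterValue, hl, ← List.length_map]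
      refine runWeight_prod_le_length p _ fun z hz => ?_
      obtain ⟨⟨j, b⟩, -, rfl⟩ := List.mem_map.1 hz
      apply hp
      cases b <;> fin_cases j
      · exact (toWord_inv (g * φ ga * g⁻¹)).symm ▸ hx.invRev
      · exact (toWord_inv (g * φ gb * g⁻¹)).symm ▸ hy.invRev
      · exact hx
      · exact hy
    have hcyc : IsCyclicallyReduced c.toWord := by
      refine ⟨isReduced_toWord, fun s hs t ht hst => ?_⟩
      by_contra hne
      exact hcr t ht s hs (Prod.ext hst (Bool.eq_not.2 hne))
    obtain ⟨C, hC, hinf⟩ :=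
      exists_isRotated_infix_conj (isReduced_toWord (x := g * h)) hcyc
    have hconj : g * h * c * (g * h)⁻¹ = g * φ w * g⁻¹ := by
      rw [hc]
      group
    rw [mk_toWord, mk_toWord, hconj] at hinf
    have h2 := runWeight_le_of_isRotated p hC
    have h3 := runWeight_le_of_infix p hinf
    have h4 : l + 2 ≤ runWeight p c.toWord := by
      rcases hb with hb | hb
      all_goals
        have := runWeight_le_of_infix p hb
        rwa [runWeight_replicate p (by simp [p])] at this
    omega
  refine ⟨hblock, fun ⟨h0, h1⟩ => ?_⟩
  obtain ⟨i, hi⟩ := hblock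
  rw [ga, toWord_of_pow] at h0
  rw [gb, toWord_of_pow] at h1
  fin_cases i
  · exact hi (Or.inl h0)
  · exact hi (Or.inl h1)
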